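/- For real $\nu\ge 0$ and $z>0$ let $J_\nu(z)=\sum_{m=0}^\infty \frac{(-1)^m}{m!\,\Gamma(\nu+m+1)}\left(\frac z2\right)^{\nu+2m}$ be the Bessel function of the first kind of order $\nu$. Let $\nu$ be a real number with $\nu\ge 1$. Write $j_{\nu-1,k}$, $\lambda^{-}_{\nu-1,k}$ and $\lambda^{+}_{\nu-1,k}$ ($k\ge 1$) for the $k$-th positive zero, in increasing order, of $J_{\nu-1}$, $J_{\nu-1}-J_\nu$ and $J_{\nu-1}+J_\nu$ respectively, and let $j'_{\nu-1,k}$ be the $k$-th positive zero of $J_{\nu-1}'$ if $\nu>1$, while for $\nu=1$ the zero of $J_0'$ at the origin is counted as the first one: $j'_{0,1}=0$, and $j'_{0,k+1}$ is the $k$-th positive zero of $J_0'$. (All these increasing enumerations are assumed to exist.) Then for every integer $k\ge 1$ one has $$j_{\nu-1,k}<\lambda^{+}_{\nu-1,k}<j'_{\nu-1,k+1}<\lambda^{-}_{\nu-1,k+1}<j_{\nu-1,k+1}.$$ -/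

import Mathlib

/-- Bessel function of the first kind of real order `ν`, defined via its power series
`J_ν(z) = ∑ₘ (−1)^m / (m! Γ(ν+m+1)) (z/2)^(ν+2m)` (with real-exponent powers).
It is only used at `ν ≥ 0` and `z > 0`. -/
noncomputable def besselJ (ν z : ℝ) : ℝ :=
  ∑' m : ℕ, ((-1 : ℝ) ^ m / (Nat.factorial m * Real.Gamma (ν + m + 1))) *
    (z / 2) ^ (ν + 2 * (m : ℝ))

/-- `x` (indexed by `k ≥ 1`) enumerates the set `S` in increasing order: it is strictly
increasing on indices `k ≥ 1`, each `x k` with `k ≥ 1` lies in `S`, and every element of `S`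
is such an `x k`. -/
def EnumIncreasing (S : Set ℝ) (x : ℕ → ℝ) : Prop :=
  StrictMonoOn x (Set.Ici 1) ∧ (∀ k, 1 ≤ k → x k ∈ S) ∧ ∀ z ∈ S, ∃ k, 1 ≤ k ∧ x k = z

/-- The set of positive zeroes of `f`. -/
def posZeros (f : ℝ → ℝ) : Set ℝ := {z | 0 < z ∧ f z = 0}

/-- The set of zeroes of `J_μ′` that are numbered `j′_{μ,1} < j′_{μ,2} < ⋯`: the positive ones,
together with `z = 0` in the case of order `μ = 0` only (the standard convention
`j′_{0,1} = 0`). -/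
def besselDerivZeros (μ : ℝ) : Set ℝ :=
  {z | z ∈ posZeros (deriv (besselJ μ)) ∨ (μ = 0 ∧ z = 0)}

open Set

/-- A pair `(A, B)` solving the first-order system satisfied by `(J_μ, J_{μ+1})` on `(0, ∞)`. -/
structure BesselPair (μ : ℝ) (A B : ℝ → ℝ) : Prop where
  deriv_fst : ∀ z, 0 < z → HasDerivAt A (μ / z * A z - B z) z
  deriv_snd : ∀ z, 0 < z → HasDerivAt B (A z - (μ + 1) / z * B z) z
  cont_fst : ContinuousOn A (Ici 0)
  cont_snd : ContinuousOn B (Ici 0)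

/-- The weighted form of `B` whose derivative is a positive multiple of `A`. -/
noncomputable def sndForm (μ : ℝ) (B : ℝ → ℝ) (z : ℝ) : ℝ := z ^ (μ + 1) * B z

/-- The weighted form of `A + B` whose derivative is a positive multiple of `A`. -/
noncomputable def sumForm (μ : ℝ) (A B : ℝ → ℝ) (z : ℝ) : ℝ :=
  Real.exp z * z ^ (μ + 1) * (A z + B z)

/-- The weighted form of `A - B` whose derivative is `(2μ + 1) / z - 2` times a positive multiple
of `A`. -/
noncomputable def diffForm (μ : ℝ) (A B : ℝ → ℝ) (z : ℝ) : ℝ :=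
  Real.exp (-z) * z ^ (μ + 1) * (A z - B z)

/-- The form `z A'(z)`. -/
noncomputable def derivForm (μ : ℝ) (A B : ℝ → ℝ) (z : ℝ) : ℝ := μ * A z - z * B z

theorem hasDerivAt_rpow_weight (μ : ℝ) {z : ℝ} (hz : 0 < z) :
    HasDerivAt (fun z : ℝ => z ^ (μ + 1)) ((μ + 1) / z * z ^ (μ + 1)) z := by
  convert Real.hasDerivAt_rpow_const (p := μ + 1) (Or.inl hz.ne') using 1
  rw [Real.rpow_sub_one hz.ne']
  ring

theorem continuous_rpow_weight {μ : ℝ} (hμ : 0 ≤ μ) : Continuous fun z : ℝ => z ^ (μ + 1) :=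
  Real.continuous_rpow_const (by linarith)

namespace BesselPair

variable {μ : ℝ} {A B : ℝ → ℝ}

theorem neg (h : BesselPair μ A B) : BesselPair μ (fun z => -A z) (fun z => -B z) where
  deriv_fst z hz := by
    refine HasDerivAt.congr_deriv ((h.deriv_fst z hz).fun_neg) ?_
    ring
  deriv_snd z hz := by
    refine HasDerivAt.congr_deriv ((h.deriv_snd z hz).fun_neg) ?_
    ring
  cont_fst := h.cont_fst.fun_neg
  cont_snd := h.cont_snd.fun_neg

theorem hasDerivAt_sndForm (h : BesselPair μ A B) {z : ℝ} (hz : 0 < z) :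
    HasDerivAt (sndForm μ B) (z ^ (μ + 1) * A z) z := by
  refine HasDerivAt.congr_deriv ((hasDerivAt_rpow_weight μ hz).fun_mul (h.deriv_snd z hz)) ?_
  ring

theorem hasDerivAt_sumForm (h : BesselPair μ A B) {z : ℝ} (hz : 0 < z) :
    HasDerivAt (sumForm μ A B)
      (Real.exp z * z ^ (μ + 1) * ((2 + (2 * μ + 1) / z) * A z)) z := by
  refine HasDerivAt.congr_deriv
    (((Real.hasDerivAt_exp z).fun_mul (hasDerivAt_rpow_weight μ hz)).fun_mul
      ((h.deriv_fst z hz).fun_add (h.deriv_snd z hz))) ?_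
  ring

theorem hasDerivAt_diffForm (h : BesselPair μ A B) {z : ℝ} (hz : 0 < z) :
    HasDerivAt (diffForm μ A B)
      (Real.exp (-z) * z ^ (μ + 1) * (((2 * μ + 1) / z - 2) * A z)) z := by
  refine HasDerivAt.congr_deriv
    (((hasDerivAt_neg z).exp.fun_mul (hasDerivAt_rpow_weight μ hz)).fun_mul
      ((h.deriv_fst z hz).fun_sub (h.deriv_snd z hz))) ?_
  ring

theorem hasDerivAt_derivForm (h : BesselPair μ A B) {z : ℝ} (hz : 0 < z) :
    HasDerivAt (derivForm μ A B) ((μ ^ 2 / z - z) * A z) z := by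
  refine HasDerivAt.congr_deriv
    (((h.deriv_fst z hz).const_mul μ).fun_sub
      ((hasDerivAt_id z).fun_mul (h.deriv_snd z hz))) ?_
  simp only [id]
  field_simp
  ring

theorem continuousOn_sndForm (h : BesselPair μ A B) (hμ : 0 ≤ μ) :
    ContinuousOn (sndForm μ B) (Ici 0) :=
  (continuous_rpow_weight hμ).continuousOn.mul h.cont_snd

theorem continuousOn_sumForm (h : BesselPair μ A B) (hμ : 0 ≤ μ) :
    ContinuousOn (sumForm μ A B) (Ici 0) :=
  (Real.continuous_exp.mul (continuous_rpow_weight hμ)).continuousOn.mul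
    (h.cont_fst.add h.cont_snd)

theorem continuousOn_diffForm (h : BesselPair μ A B) (hμ : 0 ≤ μ) :
    ContinuousOn (diffForm μ A B) (Ici 0) :=
  ((Real.continuous_exp.comp continuous_neg).mul (continuous_rpow_weight hμ)).continuousOn.mul
    (h.cont_fst.sub h.cont_snd)

theorem continuousOn_derivForm (h : BesselPair μ A B) :
    ContinuousOn (derivForm μ A B) (Ici 0) :=
  (h.cont_fst.const_smul μ).sub (continuousOn_id.mul h.cont_snd)

end BesselPair

theorem strictMonoOn_Icc_of_hasDerivAt_pos {f f' : ℝ → ℝ} {a b : ℝ} (ha : 0 ≤ a)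
    (hc : ContinuousOn f (Ici 0)) (hd : ∀ z, 0 < z → HasDerivAt f (f' z) z)
    (hp : ∀ z ∈ Ioo a b, 0 < f' z) : StrictMonoOn f (Icc a b) := by
  refine strictMonoOn_of_deriv_pos (convex_Icc a b)
    (hc.mono fun z hz => ha.trans hz.1) fun z hz => ?_
  rw [interior_Icc] at hz
  rw [(hd z (ha.trans_lt hz.1)).deriv]
  exact hp z hz

theorem strictAntiOn_Icc_of_hasDerivAt_neg {f f' : ℝ → ℝ} {a b : ℝ} (ha : 0 ≤ a)
    (hc : ContinuousOn f (Ici 0)) (hd : ∀ z, 0 < z → HasDerivAt f (f' z) z)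
    (hp : ∀ z ∈ Ioo a b, f' z < 0) : StrictAntiOn f (Icc a b) := by
  refine strictAntiOn_of_deriv_neg (convex_Icc a b)
    (hc.mono fun z hz => ha.trans hz.1) fun z hz => ?_
  rw [interior_Icc] at hz
  rw [(hd z (ha.trans_lt hz.1)).deriv]
  exact hp z hz

theorem existsUnique_zero_of_strictMonoOn {f : ℝ → ℝ} {a b : ℝ} (hab : a < b)
    (hc : ContinuousOn f (Icc a b)) (hm : StrictMonoOn f (Icc a b)) (ha : f a < 0)
    (hb : 0 < f b) : ∃! z, z ∈ Ioo a b ∧ f z = 0 := by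
  obtain ⟨z, hz, hfz⟩ := intermediate_value_Ioo hab.le hc ⟨ha, hb⟩
  exact ⟨z, ⟨hz, hfz⟩, fun y hy => hm.injOn (Ioo_subset_Icc_self hy.1)
    (Ioo_subset_Icc_self hz) (hy.2.trans hfz.symm)⟩

theorem existsUnique_zero_of_strictAntiOn {f : ℝ → ℝ} {a b : ℝ} (hab : a < b)
    (hc : ContinuousOn f (Icc a b)) (hm : StrictAntiOn f (Icc a b)) (ha : 0 < f a)
    (hb : f b < 0) : ∃! z, z ∈ Ioo a b ∧ f z = 0 := by
  obtain ⟨z, hz, hfz⟩ := intermediate_value_Ioo' hab.le hc ⟨hb, ha⟩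
  exact ⟨z, ⟨hz, hfz⟩, fun y hy => hm.injOn (Ioo_subset_Icc_self hy.1)
    (Ioo_subset_Icc_self hz) (hy.2.trans hfz.symm)⟩

theorem existsUnique_zero_of_strictMonoOn_of_strictAntiOn {f : ℝ → ℝ} {c b : ℝ} (hc0 : 0 < c)
    (hcb : c < b) (hc : ContinuousOn f (Icc c b)) (hm : StrictMonoOn f (Icc 0 c))
    (ha : StrictAntiOn f (Icc c b)) (h0 : f 0 = 0) (hb : f b < 0) :
    ∃! z, z ∈ Ioo 0 b ∧ f z = 0 := by
  have hpos : ∀ z ∈ Ioc 0 c, 0 < f z := fun z hz =>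
    h0 ▸ hm ⟨le_rfl, hc0.le⟩ ⟨hz.1.le, hz.2⟩ hz.1
  obtain ⟨z, ⟨hz, hfz⟩, hu⟩ :=
    existsUnique_zero_of_strictAntiOn hcb hc ha (hpos c ⟨hc0, le_rfl⟩) hb
  refine ⟨z, ⟨⟨hc0.trans hz.1, hz.2⟩, hfz⟩, fun y hy => hu y ⟨⟨?_, hy.1.2⟩, hy.2⟩⟩
  by_contra! hyc
  exact (hpos y ⟨hy.1.1, hyc⟩).ne' hy.2

namespace BesselPair

variable {μ : ℝ} {A B : ℝ → ℝ}

theorem derivForm_eq_zero_iff (h : BesselPair μ A B) {z : ℝ} (hz : 0 < z) :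
    deriv A z = 0 ↔ derivForm μ A B z = 0 := by
  have : derivForm μ A B z = z * deriv A z := by
    rw [(h.deriv_fst z hz).deriv, derivForm]
    field_simp
  rw [this]
  simp [hz.ne']

theorem sumForm_eq_zero_iff {z : ℝ} (hz : 0 < z) : A z + B z = 0 ↔ sumForm μ A B z = 0 := by
  have := Real.rpow_pos_of_pos hz (μ + 1)
  simp [sumForm, (Real.exp_pos z).ne', this.ne']

theorem diffForm_eq_zero_iff {z : ℝ} (hz : 0 < z) : A z - B z = 0 ↔ diffForm μ A B z = 0 := by
  have := Real.rpow_pos_of_pos hz (μ + 1)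
  simp [diffForm, (Real.exp_pos (-z)).ne', this.ne']

/-- On a nodal interval on which `A` is positive, `B` is negative at the left end and positive
at the right end. -/
theorem snd_endpoints (h : BesselPair μ A B) (hμ : 0 ≤ μ) {a b : ℝ} (ha : 0 < a) (hab : a < b)
    (hAa : A a = 0) (hAb : A b = 0) (hA : ∀ z ∈ Ioo a b, 0 < A z) : B a < 0 ∧ 0 < B b := by
  have hmono : StrictMonoOn (sndForm μ B) (Icc a b) :=
    strictMonoOn_Icc_of_hasDerivAt_pos ha.le (h.continuousOn_sndForm hμ)
      (fun z hz => h.hasDerivAt_sndForm hz) fun z hz =>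
        mul_pos (Real.rpow_pos_of_pos (ha.trans hz.1) _) (hA z hz)
  have hder : ∀ z, 0 < z → HasDerivAt (fun z => z ^ (-μ) * A z) (-(z ^ (-μ) * B z)) z := by
    intro z hz
    have h1 := hasDerivAt_rpow_weight (-μ - 1) hz
    simp only [sub_add_cancel] at h1
    refine HasDerivAt.congr_deriv (h1.fun_mul (h.deriv_fst z hz)) ?_
    ring
  obtain ⟨c, hc, hBc⟩ := exists_hasDerivAt_eq_zero hab
    (f := fun z => z ^ (-μ) * A z) (f' := fun z => -(z ^ (-μ) * B z))
    (fun z hz => (hder z (ha.trans_le hz.1)).continuousAt.continuousWithinAt)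
    (by simp [hAa, hAb]) (fun z hz => hder z (ha.trans hz.1))
  have hc0 := ha.trans hc.1
  have hBc : B c = 0 := by
    simpa [(Real.rpow_pos_of_pos hc0 (-μ)).ne'] using hBc
  have h1 := hmono (left_mem_Icc.2 hab.le) (Ioo_subset_Icc_self hc) hc.1
  have h2 := hmono (Ioo_subset_Icc_self hc) (right_mem_Icc.2 hab.le) hc.2
  simp only [sndForm, hBc, mul_zero] at h1 h2
  exact ⟨(pos_iff_neg_of_mul_neg h1).1 (Real.rpow_pos_of_pos ha _),
    (pos_iff_pos_of_mul_pos h2).1 (Real.rpow_pos_of_pos (ha.trans hab) _)⟩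

/-- The zeros of `A + B`, `A'` and `A - B` in a nodal interval `(a, b)` of `A`: there is exactly
one of each, in this order; moreover `B` does not vanish at `a`. -/
def Interlaces (A B : ℝ → ℝ) (a b : ℝ) : Prop :=
  B a ≠ 0 ∧ (∃! z, z ∈ Ioo a b ∧ A z + B z = 0) ∧ (∃! z, z ∈ Ioo a b ∧ deriv A z = 0) ∧
    (∃! z, z ∈ Ioo a b ∧ A z - B z = 0) ∧
    ∀ p ∈ Ioo a b, ∀ q ∈ Ioo a b, ∀ r ∈ Ioo a b,
      A p + B p = 0 → deriv A q = 0 → A r - B r = 0 → p < q ∧ q < r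

theorem interlaces_of_pos (h : BesselPair μ A B) (hμ : 0 ≤ μ) {a b : ℝ} (ha : μ + 1 / 2 ≤ a)
    (hab : a < b) (hAa : A a = 0) (hAb : A b = 0) (hA : ∀ z ∈ Ioo a b, 0 < A z) :
    Interlaces A B a b := by
  have ha0 : 0 < a := by linarith
  have hb0 := ha0.trans hab
  have hsub : Icc a b ⊆ Ici 0 := fun z hz => ha0.le.trans hz.1
  obtain ⟨hBa, hBb⟩ := h.snd_endpoints hμ ha0 hab hAa hAb hA
  have hw : ∀ z : ℝ, 0 < z → 0 < z ^ (μ + 1) := fun z hz => Real.rpow_pos_of_pos hz _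
  have hS : StrictMonoOn (sumForm μ A B) (Icc a b) :=
    strictMonoOn_Icc_of_hasDerivAt_pos ha0.le (h.continuousOn_sumForm hμ)
      (fun z hz => h.hasDerivAt_sumForm hz) fun z hz => by
        have hz0 := ha0.trans hz.1
        have := hA z hz
        have := hw z hz0
        positivity
  have hD : StrictAntiOn (diffForm μ A B) (Icc a b) :=
    strictAntiOn_Icc_of_hasDerivAt_neg ha0.le (h.continuousOn_diffForm hμ)
      (fun z hz => h.hasDerivAt_diffForm hz) fun z hz => by
        have hz0 := ha0.trans hz.1
        refine mul_neg_of_pos_of_neg (mul_pos (Real.exp_pos _) (hw z hz0))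
          (mul_neg_of_neg_of_pos ?_ (hA z hz))
        rw [sub_neg, div_lt_iff₀ hz0]
        linarith [hz.1]
  have hQ : StrictAntiOn (derivForm μ A B) (Icc a b) :=
    strictAntiOn_Icc_of_hasDerivAt_neg ha0.le h.continuousOn_derivForm
      (fun z hz => h.hasDerivAt_derivForm hz) fun z hz => by
        have hz0 := ha0.trans hz.1
        refine mul_neg_of_neg_of_pos ?_ (hA z hz)
        rw [sub_neg, div_lt_iff₀ hz0]
        nlinarith [hz.1]
  have hpos : ∀ {z}, z ∈ Ioo a b → 0 < z := fun hz => ha0.trans hz.1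
  refine ⟨hBa.ne, ?_, ?_, ?_, ?_⟩
  · have := existsUnique_zero_of_strictMonoOn hab ((h.continuousOn_sumForm hμ).mono hsub) hS
      (by simpa [sumForm, hAa] using
          mul_neg_of_pos_of_neg (mul_pos (Real.exp_pos a) (hw a ha0)) hBa)
      (by simpa [sumForm, hAb] using mul_pos (mul_pos (Real.exp_pos b) (hw b hb0)) hBb)
    refine (existsUnique_congr fun z => ?_).2 this
    exact and_congr_right fun hz => sumForm_eq_zero_iff (hpos hz)
  · have := existsUnique_zero_of_strictAntiOn hab (h.continuousOn_derivForm.mono hsub) hQ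
      (by simpa [derivForm, hAa] using mul_neg_of_pos_of_neg ha0 hBa)
      (by simpa [derivForm, hAb] using mul_pos hb0 hBb)
    refine (existsUnique_congr fun z => ?_).2 this
    exact and_congr_right fun hz => h.derivForm_eq_zero_iff (hpos hz)
  · have := existsUnique_zero_of_strictAntiOn hab ((h.continuousOn_diffForm hμ).mono hsub) hD
      (by simpa [diffForm, hAa] using
          mul_neg_of_pos_of_neg (mul_pos (Real.exp_pos (-a)) (hw a ha0)) hBa)
      (by simpa [diffForm, hAb] using mul_pos (mul_pos (Real.exp_pos (-b)) (hw b hb0)) hBb)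
    refine (existsUnique_congr fun z => ?_).2 this
    exact and_congr_right fun hz => diffForm_eq_zero_iff (hpos hz)
  · intro p hp q hq r hr hSp hQq hDr
    have hq0 := hpos hq
    have hAq := hA q hq
    have hBq : B q = μ / q * A q := by
      rw [(h.deriv_fst q hq0).deriv] at hQq
      linarith
    constructor
    · refine (hS.lt_iff_lt (Ioo_subset_Icc_self hp) (Ioo_subset_Icc_self hq)).1 ?_
      rw [(sumForm_eq_zero_iff (hpos hp)).1 hSp]
      refine mul_pos (mul_pos (Real.exp_pos q) (hw q hq0)) ?_
      rw [hBq]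
      positivity
    · refine (hD.lt_iff_gt (Ioo_subset_Icc_self hr) (Ioo_subset_Icc_self hq)).1 ?_
      rw [(diffForm_eq_zero_iff (hpos hr)).1 hDr]
      refine mul_pos (mul_pos (Real.exp_pos (-q)) (hw q hq0)) ?_
      have : μ / q < 1 := by
        rw [div_lt_one hq0]
        linarith [hq.1]
      rw [hBq]
      nlinarith

theorem interlaces_neg {a b : ℝ} (h : Interlaces (fun z => -A z) (fun z => -B z) a b) :
    Interlaces A B a b := by
  have h1 : ∀ z, -A z + -B z = 0 ↔ A z + B z = 0 := fun z => by
    constructor <;> intro h <;> linarith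
  have h2 : ∀ z, -A z - -B z = 0 ↔ A z - B z = 0 := fun z => by
    constructor <;> intro h <;> linarith
  simpa only [Interlaces, h1, h2, deriv.fun_neg, neg_eq_zero, ne_eq] using h

theorem interlaces (h : BesselPair μ A B) (hμ : 0 ≤ μ) {a b : ℝ} (ha : μ + 1 / 2 ≤ a)
    (hab : a < b) (hAa : A a = 0) (hAb : A b = 0) (hA : ∀ z ∈ Ioo a b, A z ≠ 0) :
    Interlaces A B a b := by
  have hc : ContinuousOn A (Ioo a b) :=
    h.cont_fst.mono fun z hz => show (0 : ℝ) ≤ z by linarith [hz.1]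
  by_cases hp : ∀ z ∈ Ioo a b, 0 < A z
  · exact h.interlaces_of_pos hμ ha hab hAa hAb hp
  · push Not at hp
    obtain ⟨w, hw, hAw⟩ := hp
    refine interlaces_neg (h.neg.interlaces_of_pos hμ ha hab (by simp [hAa]) (by simp [hAb]) ?_)
    intro z hz
    by_contra! hAz
    obtain ⟨y, hy, hAy⟩ := isPreconnected_Ioo.intermediate_value hw hz hc
      ⟨hAw, show (0 : ℝ) ≤ A z by linarith⟩
    exact hA y hy hAy

theorem snd_pos_first (h : BesselPair μ A B) (hμ : 0 ≤ μ) {b : ℝ}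
    (hA : ∀ z ∈ Ioo 0 b, 0 < A z) {z : ℝ} (hz : z ∈ Ioc 0 b) : 0 < B z := by
  have hmono : StrictMonoOn (sndForm μ B) (Icc 0 b) :=
    strictMonoOn_Icc_of_hasDerivAt_pos le_rfl (h.continuousOn_sndForm hμ)
      (fun z hz => h.hasDerivAt_sndForm hz) fun z hz =>
        mul_pos (Real.rpow_pos_of_pos hz.1 _) (hA z hz)
  have h1 := hmono ⟨le_rfl, hz.1.le.trans hz.2⟩ (Ioc_subset_Icc_self hz) hz.1
  rw [sndForm, Real.zero_rpow (by linarith), zero_mul] at h1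
  exact (pos_iff_pos_of_mul_pos h1).1 (Real.rpow_pos_of_pos hz.1 _)

theorem strictMonoOn_diffForm (h : BesselPair μ A B) (hμ : 0 ≤ μ) {b c : ℝ}
    (hc : c ≤ μ + 1 / 2) (hcb : c ≤ b) (hA : ∀ z ∈ Ioo 0 b, 0 < A z) :
    StrictMonoOn (diffForm μ A B) (Icc 0 c) :=
  strictMonoOn_Icc_of_hasDerivAt_pos le_rfl (h.continuousOn_diffForm hμ)
    (fun z hz => h.hasDerivAt_diffForm hz) fun z hz => by
      refine mul_pos (mul_pos (Real.exp_pos _) (Real.rpow_pos_of_pos hz.1 _))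
        (mul_pos ?_ (hA z ⟨hz.1, hz.2.trans_le hcb⟩))
      rw [sub_pos, lt_div_iff₀ hz.1]
      linarith [hz.2]

theorem diffForm_zero (hμ : 0 ≤ μ) : diffForm μ A B 0 = 0 := by
  rw [diffForm, Real.zero_rpow (by linarith)]
  simp

/-- The first positive zero of `A` exceeds `μ + 1 / 2`. -/
theorem lt_first_zero (h : BesselPair μ A B) (hμ : 0 ≤ μ) {b : ℝ} (hb : 0 < b)
    (hA : ∀ z ∈ Ioo 0 b, 0 < A z) (hAb : A b = 0) : μ + 1 / 2 < b := by
  by_contra! hle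
  have h1 := h.strictMonoOn_diffForm hμ hle le_rfl hA ⟨le_rfl, hb.le⟩ ⟨hb.le, le_rfl⟩ hb
  have h2 := h.snd_pos_first hμ hA ⟨hb, le_rfl⟩
  rw [diffForm_zero hμ, diffForm, hAb] at h1
  have := (pos_iff_pos_of_mul_pos h1).1
    (mul_pos (Real.exp_pos _) (Real.rpow_pos_of_pos hb _))
  linarith

theorem existsUnique_diff_first (h : BesselPair μ A B) (hμ : 0 ≤ μ) {b : ℝ} (hb : 0 < b)
    (hA : ∀ z ∈ Ioo 0 b, 0 < A z) (hAb : A b = 0) : ∃! z, z ∈ Ioo 0 b ∧ A z - B z = 0 := by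
  have hcb := h.lt_first_zero hμ hb hA hAb
  have hc0 : 0 < μ + 1 / 2 := by linarith
  have := existsUnique_zero_of_strictMonoOn_of_strictAntiOn hc0 hcb
    ((h.continuousOn_diffForm hμ).mono fun z hz => hc0.le.trans hz.1)
    (h.strictMonoOn_diffForm hμ le_rfl hcb.le hA)
    (strictAntiOn_Icc_of_hasDerivAt_neg hc0.le (h.continuousOn_diffForm hμ)
      (fun z hz => h.hasDerivAt_diffForm hz) fun z hz => by
        have hz0 := hc0.trans hz.1
        refine mul_neg_of_pos_of_neg
          (mul_pos (Real.exp_pos _) (Real.rpow_pos_of_pos hz0 _))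
          (mul_neg_of_neg_of_pos ?_ (hA z ⟨hz0, hz.2⟩))
        rw [sub_neg, div_lt_iff₀ hz0]
        linarith [hz.1])
    (diffForm_zero hμ)
    (by simpa [diffForm, hAb] using mul_pos (mul_pos (Real.exp_pos (-b))
          (Real.rpow_pos_of_pos hb (μ + 1))) (h.snd_pos_first hμ hA ⟨hb, le_rfl⟩))
  refine (existsUnique_congr fun z => ?_).2 this
  exact and_congr_right fun hz => diffForm_eq_zero_iff hz.1

theorem existsUnique_deriv_first (h : BesselPair μ A B) (hμ : 0 < μ) {b : ℝ} (hb : 0 < b)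
    (hA0 : A 0 = 0) (hA : ∀ z ∈ Ioo 0 b, 0 < A z) (hAb : A b = 0) :
    ∃! z, z ∈ Ioo 0 b ∧ deriv A z = 0 := by
  have hcb : μ < b := by linarith [h.lt_first_zero hμ.le hb hA hAb]
  have := existsUnique_zero_of_strictMonoOn_of_strictAntiOn hμ hcb
    (h.continuousOn_derivForm.mono fun z hz => hμ.le.trans hz.1)
    (strictMonoOn_Icc_of_hasDerivAt_pos le_rfl h.continuousOn_derivForm
      (fun z hz => h.hasDerivAt_derivForm hz) fun z hz => by
        refine mul_pos ?_ (hA z ⟨hz.1, hz.2.trans hcb⟩)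
        rw [sub_pos, lt_div_iff₀ hz.1]
        nlinarith [hz.1, hz.2])
    (strictAntiOn_Icc_of_hasDerivAt_neg hμ.le h.continuousOn_derivForm
      (fun z hz => h.hasDerivAt_derivForm hz) fun z hz => by
        have hz0 := hμ.trans hz.1
        refine mul_neg_of_neg_of_pos ?_ (hA z ⟨hz0, hz.2⟩)
        rw [sub_neg, div_lt_iff₀ hz0]
        nlinarith [hz.1])
    (by simp [derivForm, hA0])
    (by simpa [derivForm, hAb] using mul_pos hb (h.snd_pos_first hμ.le hA ⟨hb, le_rfl⟩))
  refine (existsUnique_congr fun z => ?_).2 this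
  exact and_congr_right fun hz => h.derivForm_eq_zero_iff hz.1

end BesselPair

/-- If every gap of the increasing sequence `t` contains exactly one element of `T`, and `T` has
no other element below the terms of `t`, then the increasing enumeration of `T` follows the gaps. -/
theorem EnumIncreasing.mem_Ioo {T : Set ℝ} {x t : ℕ → ℝ} (hx : EnumIncreasing T x)
    (ht : StrictMono t) (h0 : ∀ z ∈ T, t 0 < z) (hT : ∀ k, t k ∉ T)
    (hu : ∀ k, ∃! z, z ∈ Ioo (t k) (t (k + 1)) ∧ z ∈ T) (k : ℕ) :
    x (k + 1) ∈ Ioo (t k) (t (k + 1)) := by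
  obtain ⟨hmono, hmem, hsurj⟩ := hx
  induction k using Nat.strong_induction_on with
  | _ k ih =>
    obtain ⟨y, ⟨hy, hyT⟩, -⟩ := hu k
    obtain ⟨m, hm, rfl⟩ := hsurj y hyT
    have hkm : k + 1 ≤ m := by
      by_contra! hlt
      obtain ⟨i, rfl⟩ := Nat.exists_eq_add_of_le' hm
      have := (ih i (by lia)).2
      have := ht.monotone (show i + 1 ≤ k by lia)
      linarith [hy.1]
    refine ⟨?_, (hmono.monotoneOn (show 1 ≤ k + 1 by lia) hm hkm).trans_lt hy.2⟩
    have hxT := hmem (k + 1) (by lia)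
    by_contra! hle
    have hex : ∃ i, x (k + 1) ≤ t i := ⟨k, hle⟩
    classical
    have hle' := Nat.find_spec hex
    have hmin : Nat.find hex ≤ k := Nat.find_le hle
    rcases hi : Nat.find hex with _ | i
    · rw [hi] at hle'
      exact (h0 _ hxT).not_ge hle'
    · rw [hi] at hle'
      have hlt : t i < x (k + 1) := not_le.1 (Nat.find_min hex (by lia))
      have hlt' : x (k + 1) < t (i + 1) :=
        hle'.lt_of_ne fun he => hT (i + 1) (he ▸ hxT)
      have := (hu i).unique ⟨⟨hlt, hlt'⟩, hxT⟩ ⟨ih i (by lia), hmem (i + 1) (by lia)⟩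
      have := hmono (show 1 ≤ i + 1 by lia) (show 1 ≤ k + 1 by lia) (show i + 1 < k + 1 by lia)
      linarith

/-- The coefficients of the entire function `besselG μ`. -/
noncomputable def besselCoeff (μ : ℝ) (m : ℕ) : ℝ :=
  (-1 : ℝ) ^ m / (Nat.factorial m * Real.Gamma (μ + m + 1))

/-- The entire function `G_μ` with `J_μ(z) = (z/2)^μ G_μ(z²/4)`. -/
noncomputable def besselG (μ t : ℝ) : ℝ := ∑' m : ℕ, besselCoeff μ m * t ^ m

theorem gamma_le_gamma_add_nat {μ : ℝ} (hμ : 0 ≤ μ) (m : ℕ) :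
    Real.Gamma (μ + 1) ≤ Real.Gamma (μ + m + 1) := by
  induction m with
  | zero => simp
  | succ m ih =>
    have h1 : Real.Gamma (μ + (m + 1 : ℕ) + 1) = (μ + m + 1) * Real.Gamma (μ + m + 1) := by
      rw [← Real.Gamma_add_one (by positivity)]
      push_cast
      ring_nf
    have h2 : 0 < Real.Gamma (μ + m + 1) := Real.Gamma_pos_of_pos (by positivity)
    rw [h1]
    have : (0 : ℝ) ≤ m := m.cast_nonneg
    nlinarith

theorem abs_besselCoeff_le {μ : ℝ} (hμ : 0 ≤ μ) (m : ℕ) :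
    |besselCoeff μ m| ≤ (Real.Gamma (μ + 1))⁻¹ * (Nat.factorial m : ℝ)⁻¹ := by
  have h1 : 0 < Real.Gamma (μ + 1) := Real.Gamma_pos_of_pos (by positivity)
  have h2 := gamma_le_gamma_add_nat hμ m
  have h3 := h1.trans_le h2
  rw [besselCoeff, abs_div, abs_pow, abs_neg, abs_one, one_pow, abs_of_pos (by positivity),
    one_div, mul_inv, mul_comm]
  gcongr

theorem summable_besselG {μ : ℝ} (hμ : 0 ≤ μ) (t : ℝ) :
    Summable fun m : ℕ => besselCoeff μ m * t ^ m := by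
  refine Summable.of_norm_bounded
    (((Real.summable_pow_div_factorial |t|).mul_left (Real.Gamma (μ + 1))⁻¹)) fun m => ?_
  rw [Real.norm_eq_abs, abs_mul, abs_pow]
  calc _ ≤ (Real.Gamma (μ + 1))⁻¹ * (Nat.factorial m : ℝ)⁻¹ * |t| ^ m := by
        gcongr
        exact abs_besselCoeff_le hμ m
    _ = _ := by ring

theorem besselCoeff_succ (μ : ℝ) (m : ℕ) :
    besselCoeff μ (m + 1) * (m + 1) = -besselCoeff (μ + 1) m := by
  have h : μ + ((m + 1 : ℕ) : ℝ) + 1 = μ + 1 + m + 1 := by push_cast; ring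
  have h' : ((m : ℝ) + 1) ≠ 0 := by positivity
  rw [besselCoeff, besselCoeff, h, Nat.factorial_succ, pow_succ]
  push_cast
  rw [mul_assoc ((m : ℝ) + 1), ← div_div, div_mul_eq_mul_div, div_mul_cancel₀ _ h']
  ring

theorem hasDerivAt_besselG {μ : ℝ} (hμ : 0 ≤ μ) (t : ℝ) :
    HasDerivAt (besselG μ) (-besselG (μ + 1) t) t := by
  set R : ℝ := |t| + 1 with hR
  have hR0 : 0 ≤ R := by positivity
  have ht : t ∈ Metric.ball (0 : ℝ) R := by simp [hR]
  have hterm : ∀ (m : ℕ) (s : ℝ), besselCoeff μ (m + 1) * (((m + 1 : ℕ) : ℝ) * s ^ m) =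
      -(besselCoeff (μ + 1) m * s ^ m) := fun m s => by
    push_cast
    rw [← mul_assoc, besselCoeff_succ]
    ring
  have key := hasDerivAt_tsum_of_isPreconnected
    (g := fun (m : ℕ) s => besselCoeff μ m * s ^ m)
    (g' := fun (m : ℕ) s => besselCoeff μ m * ((m : ℝ) * s ^ (m - 1)))
    (u := fun m : ℕ => |besselCoeff μ m| * ((m : ℝ) * R ^ (m - 1)))
    (t := Metric.ball (0 : ℝ) R) (y₀ := t) (y := t) ?_ Metric.isOpen_ball
    (convex_ball (0 : ℝ) R).isPreconnected ?_ ?_ ht (summable_besselG hμ t) ht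
  · refine HasDerivAt.congr_deriv key ?_
    have hs := (summable_besselG (by linarith : 0 ≤ μ + 1) t).neg
    rw [Summable.tsum_eq_zero_add]
    · simp only [Nat.cast_zero, zero_mul, mul_zero, zero_add, Nat.add_sub_cancel, hterm]
      rw [tsum_neg, besselG]
    · rw [← summable_nat_add_iff 1]
      simpa only [Nat.add_sub_cancel, hterm] using hs
  · rw [← summable_nat_add_iff 1]
    have hs := (summable_besselG (by linarith : 0 ≤ μ + 1) R).abs
    refine hs.congr fun m => ?_
    rw [Nat.add_sub_cancel, ← abs_of_nonneg
      (by positivity : 0 ≤ ((m + 1 : ℕ) : ℝ) * R ^ m), ← abs_mul, hterm, abs_neg]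
  · intro m s _
    exact (hasDerivAt_pow m s).const_mul _
  · intro m s hs
    have hs' : |s| ≤ R := by simpa using (Metric.mem_ball.1 hs).le
    rw [Real.norm_eq_abs, abs_mul, abs_mul, abs_pow, Nat.abs_cast]
    gcongr

theorem besselG_recurrence {μ : ℝ} (hμ : 0 ≤ μ) (t : ℝ) :
    besselG μ t + t * besselG (μ + 2) t = (μ + 1) * besselG (μ + 1) t := by
  have hs0 := summable_besselG hμ t
  have hs1 := summable_besselG (by linarith : 0 ≤ μ + 1) t
  have hs2 := summable_besselG (by linarith : 0 ≤ μ + 2) t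
  have hpos : ∀ m : ℕ, 0 < Real.Gamma (μ + m + 1) := fun m => Real.Gamma_pos_of_pos (by positivity)
  have hG : ∀ m : ℕ, Real.Gamma (μ + 1 + m + 1) = (μ + m + 1) * Real.Gamma (μ + m + 1) :=
    fun m => by
      rw [← Real.Gamma_add_one (by positivity)]
      ring_nf
  have hc : ∀ m : ℕ, besselCoeff μ m = (μ + m + 1) * besselCoeff (μ + 1) m := fun m => by
    have := (hpos m).ne'
    have h3 : μ + m + 1 ≠ 0 := by positivity
    have h4 : (Nat.factorial m : ℝ) ≠ 0 := by positivity
    rw [besselCoeff, besselCoeff, hG]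
    field_simp
  have h2 : t * besselG (μ + 2) t =
      ∑' m : ℕ, -((m : ℝ) * (besselCoeff (μ + 1) m * t ^ m)) := by
    have hsh : ∀ m : ℕ, -(((m + 1 : ℕ) : ℝ) * (besselCoeff (μ + 1) (m + 1) * t ^ (m + 1))) =
        t * (besselCoeff (μ + 2) m * t ^ m) := fun m => by
      have := besselCoeff_succ (μ + 1) m
      rw [show μ + 1 + 1 = μ + 2 by ring] at this
      push_cast
      linear_combination (-t ^ (m + 1)) * this
    rw [Summable.tsum_eq_zero_add]
    · simp only [hsh]
      rw [tsum_mul_left, besselG]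
      simp
    · rw [← summable_nat_add_iff 1]
      simpa only [hsh] using hs2.mul_left t
  have h3 : Summable fun m : ℕ => -((m : ℝ) * (besselCoeff (μ + 1) m * t ^ m)) := by
    refine ((hs1.mul_left (μ + 1)).sub hs0).congr fun m => ?_
    rw [hc]
    ring
  rw [h2, besselG, besselG, ← hs0.tsum_add h3, ← tsum_mul_left]
  refine tsum_congr fun m => ?_
  rw [hc]
  ring

theorem besselJ_eq {μ : ℝ} (hμ : 0 ≤ μ) {z : ℝ} (hz : 0 ≤ z) :
    besselJ μ z = (z / 2) ^ μ * besselG μ (z ^ 2 / 4) := by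
  rw [besselJ, besselG, ← tsum_mul_left]
  refine tsum_congr fun m => ?_
  rw [Real.rpow_add_of_nonneg (by positivity) hμ (by positivity)]
  have : (z / 2) ^ (2 * (m : ℝ)) = (z ^ 2 / 4) ^ m := by
    rw [show 2 * (m : ℝ) = ((2 * m : ℕ) : ℝ) by push_cast; ring, Real.rpow_natCast, pow_mul]
    congr 1
    ring
  rw [this, besselCoeff]
  ring

theorem continuous_besselG {μ : ℝ} (hμ : 0 ≤ μ) : Continuous (besselG μ) :=
  continuous_iff_continuousAt.2 fun t => (hasDerivAt_besselG hμ t).continuousAt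

theorem continuousOn_besselJ {μ : ℝ} (hμ : 0 ≤ μ) : ContinuousOn (besselJ μ) (Ici 0) := by
  have h : Continuous fun z : ℝ => (z / 2) ^ μ * besselG μ (z ^ 2 / 4) :=
    ((Real.continuous_rpow_const hμ).comp (continuous_id.div_const 2)).mul
      ((continuous_besselG hμ).comp ((continuous_pow 2).div_const 4))
  exact h.continuousOn.congr fun z hz => besselJ_eq hμ hz

theorem hasDerivAt_besselJ {μ : ℝ} (hμ : 0 ≤ μ) {z : ℝ} (hz : 0 < z) :
    HasDerivAt (besselJ μ) (μ / z * besselJ μ z - besselJ (μ + 1) z) z := by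
  have h1 : HasDerivAt (fun z : ℝ => (z / 2) ^ μ) (1 / 2 * μ * (z / 2) ^ (μ - 1)) z := by
    exact ((hasDerivAt_id z).div_const 2).rpow_const (Or.inl (by simpa using hz.ne'))
  have h2 : HasDerivAt (fun z : ℝ => besselG μ (z ^ 2 / 4))
      (-besselG (μ + 1) (z ^ 2 / 4) * (z / 2)) z := by
    refine HasDerivAt.comp (h := fun z : ℝ => z ^ 2 / 4) z (hasDerivAt_besselG hμ (z ^ 2 / 4)) ?_
    refine HasDerivAt.congr_deriv ((hasDerivAt_pow 2 z).div_const 4) ?_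
    simp only [Nat.cast_ofNat, Nat.add_one_sub_one, pow_one]
    ring
  have h3 := (h1.fun_mul h2).congr_of_eventuallyEq (f₁ := besselJ μ)
    ((eventually_gt_nhds hz).mono fun y hy => besselJ_eq hμ hy.le)
  refine h3.congr_deriv ?_
  have hz2 : z / 2 ≠ 0 := by positivity
  rw [besselJ_eq hμ hz.le, besselJ_eq (by linarith : 0 ≤ μ + 1) hz.le, Real.rpow_sub_one hz2,
    Real.rpow_add_one hz2]
  field_simp
  ring

theorem besselJ_recurrence {μ : ℝ} (hμ : 0 ≤ μ) {z : ℝ} (hz : 0 < z) :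
    besselJ μ z + besselJ (μ + 2) z = 2 * (μ + 1) / z * besselJ (μ + 1) z := by
  have h := besselG_recurrence hμ (z ^ 2 / 4)
  have hz2 : z / 2 ≠ 0 := by positivity
  rw [besselJ_eq hμ hz.le, besselJ_eq (by linarith : 0 ≤ μ + 1) hz.le,
    besselJ_eq (by linarith : 0 ≤ μ + 2) hz.le, show μ + 2 = μ + 1 + 1 by ring,
    Real.rpow_add_one hz2, Real.rpow_add_one hz2, show μ + 1 + 1 = μ + 2 by ring]
  have : 2 * (μ + 1) / z * ((z / 2) ^ μ * (z / 2) * besselG (μ + 1) (z ^ 2 / 4)) =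
      (z / 2) ^ μ * ((μ + 1) * besselG (μ + 1) (z ^ 2 / 4)) := by
    field_simp
  rw [this, ← h]
  ring

theorem besselPair_besselJ {μ : ℝ} (hμ : 0 ≤ μ) :
    BesselPair μ (besselJ μ) (besselJ (μ + 1)) where
  deriv_fst z hz := hasDerivAt_besselJ hμ hz
  deriv_snd z hz := by
    refine (hasDerivAt_besselJ (by linarith : 0 ≤ μ + 1) hz).congr_deriv ?_
    rw [show μ + 1 + 1 = μ + 2 by ring]
    linear_combination -besselJ_recurrence hμ hz
  cont_fst := continuousOn_besselJ hμ
  cont_snd := continuousOn_besselJ (by linarith)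

theorem besselG_zero_pos {μ : ℝ} (hμ : 0 ≤ μ) : 0 < besselG μ 0 := by
  have : besselG μ 0 = besselCoeff μ 0 := by
    rw [besselG, tsum_eq_single 0 fun m hm => by simp [hm]]
    simp
  rw [this, besselCoeff]
  have := Real.Gamma_pos_of_pos (by linarith : 0 < μ + 1)
  simpa using this

theorem besselJ_pos_of_ne_zero {μ : ℝ} (hμ : 0 ≤ μ) {b : ℝ}
    (hne : ∀ z ∈ Ioo 0 b, besselJ μ z ≠ 0) {z : ℝ} (hz : z ∈ Ioo 0 b) : 0 < besselJ μ z := by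
  have hg : ∀ y ∈ Ico 0 b, 0 < besselG μ (y ^ 2 / 4) := by
    intro y hy
    by_contra! hle
    have hc : ContinuousOn (fun z : ℝ => besselG μ (z ^ 2 / 4)) (Icc 0 y) :=
      ((continuous_besselG hμ).comp ((continuous_pow 2).div_const 4)).continuousOn
    have hpos := besselG_zero_pos hμ
    obtain ⟨w, hw, hw0⟩ := intermediate_value_Icc' hy.1 hc ⟨hle, by simpa using hpos.le⟩
    simp only at hw0
    have hw1 : 0 < w := hw.1.lt_of_ne fun h => by
      rw [← h] at hw0
      norm_num at hw0
      exact hpos.ne' hw0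
    exact hne w ⟨hw1, hw.2.trans_lt hy.2⟩ (by rw [besselJ_eq hμ hw.1, hw0, mul_zero])
  rw [besselJ_eq hμ hz.1.le]
  exact mul_pos (Real.rpow_pos_of_pos (by linarith [hz.1]) _) (hg z ⟨hz.1.le, hz.2⟩)

theorem besselJ_zero_right {μ : ℝ} (hμ : 0 < μ) : besselJ μ 0 = 0 := by
  rw [besselJ_eq hμ.le le_rfl, zero_div, Real.zero_rpow hμ.ne', zero_mul]

theorem stmt18 (ν : ℝ) (hν : 1 ≤ ν)
    (j j' lamMinus lamPlus : ℕ → ℝ)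
    (hj : EnumIncreasing (posZeros (besselJ (ν - 1))) j)
    (hj' : EnumIncreasing (besselDerivZeros (ν - 1)) j')
    (hlamMinus : EnumIncreasing (posZeros fun z => besselJ (ν - 1) z - besselJ ν z) lamMinus)
    (hlamPlus : EnumIncreasing (posZeros fun z => besselJ (ν - 1) z + besselJ ν z) lamPlus)
    (k : ℕ) (hk : 1 ≤ k) :
    j k < lamPlus k ∧ lamPlus k < j' (k + 1) ∧
      j' (k + 1) < lamMinus (k + 1) ∧ lamMinus (k + 1) < j (k + 1) := by
  obtain ⟨μ, rfl⟩ : ∃ μ, ν = μ + 1 := ⟨ν - 1, by ring⟩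
  have hμ : 0 ≤ μ := by linarith
  rw [add_sub_cancel_right] at *
  have hp := besselPair_besselJ hμ
  obtain ⟨hmono, hmem, hsurj⟩ := hj
  have hjm : ∀ i m, 1 ≤ i → i < m → j i < j m := fun i m hi him =>
    hmono hi (show 1 ≤ m by lia) him
  have hj1 : 0 < j 1 := (hmem 1 le_rfl).1
  have hne : ∀ i, 1 ≤ i → ∀ z ∈ Ioo (j i) (j (i + 1)), besselJ μ z ≠ 0 := by
    intro i hi z hz h0
    obtain ⟨m, hm, rfl⟩ := hsurj z ⟨(hmem i hi).1.trans hz.1, h0⟩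
    have h1 := (hmono.lt_iff_lt hi hm).1 hz.1
    have h2 := (hmono.lt_iff_lt hm (show 1 ≤ i + 1 by lia)).1 hz.2
    lia
  have hA : ∀ z ∈ Ioo 0 (j 1), 0 < besselJ μ z := by
    refine fun z hz => besselJ_pos_of_ne_zero hμ (fun y hy h0 => ?_) hz
    obtain ⟨m, hm, rfl⟩ := hsurj y ⟨hy.1, h0⟩
    have := (hmono.lt_iff_lt hm (show 1 ≤ 1 from le_rfl)).1 hy.2
    exact absurd hm (by lia)
  have hA1 := (hmem 1 le_rfl).2
  have hgap := hp.lt_first_zero hμ hj1 hA hA1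
  have hB1 : ∀ z ∈ Ioc 0 (j 1), 0 < besselJ (μ + 1) z := fun z hz => hp.snd_pos_first hμ hA hz
  have hle1 : ∀ i, 1 ≤ i → j 1 ≤ j i := fun i hi => hmono.monotoneOn (show 1 ≤ 1 from le_rfl) hi hi
  have hI : ∀ i, 1 ≤ i → BesselPair.Interlaces (besselJ μ) (besselJ (μ + 1)) (j i) (j (i + 1)) :=
    fun i hi => hp.interlaces hμ (hgap.le.trans (hle1 i hi)) (hjm i _ hi (by lia))
      (hmem i hi).2 (hmem (i + 1) (by lia)).2 (hne i hi)
  have hS : lamPlus (k - 1 + 1) ∈ Ioo (j (k - 1 + 1)) (j (k - 1 + 1 + 1)) := by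
    refine hlamPlus.mem_Ioo (t := fun n => j (n + 1))
      (strictMono_nat_of_lt_succ fun n => hjm _ _ (by lia) (by lia)) ?_ ?_ ?_ (k - 1)
    · rintro z ⟨hz, hz0⟩
      by_contra! hle
      have h1 := hB1 z ⟨hz, hle⟩
      have h2 : 0 ≤ besselJ μ z := by
        rcases hle.eq_or_lt with rfl | hlt
        · exact hA1.ge
        · exact (hA z ⟨hz, hlt⟩).le
      simp only at hz0
      linarith
    · rintro n ⟨-, h0⟩
      simp only [(hmem (n + 1) (by lia)).2, zero_add] at h0
      exact (hI (n + 1) (by lia)).1 h0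
    · intro n
      refine (existsUnique_congr fun z => and_congr_right fun hz => ?_).2 (hI (n + 1) (by lia)).2.1
      exact and_iff_right ((hmem (n + 1) (by lia)).1.trans hz.1)
  rw [Nat.sub_add_cancel hk] at hS
  let t : ℕ → ℝ := fun n => if n = 0 then -1 else j n
  have ht0 : t 0 = -1 := if_pos rfl
  have ht : ∀ n, t (n + 1) = j (n + 1) := fun n => if_neg (by lia)
  have htm : StrictMono t := strictMono_nat_of_lt_succ fun n => by
    rcases n with _ | n
    · rw [ht0, ht]
      change -1 < j 1
      linarith
    · rw [ht, ht]
      exact hjm _ _ (by lia) (by lia)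
  have htk : t k = j k := if_neg (by lia)
  have hD : lamMinus (k + 1) ∈ Ioo (t k) (t (k + 1)) := by
    refine hlamMinus.mem_Ioo htm ?_ ?_ ?_ k
    · rintro z ⟨hz, -⟩
      linarith
    · rintro (_ | n) ⟨h1, h0⟩
      · linarith
      · rw [ht] at h0
        simp only [(hmem (n + 1) (by lia)).2, zero_sub, neg_eq_zero] at h0
        exact (hI (n + 1) (by lia)).1 h0
    · rintro (_ | n)
      · refine (existsUnique_congr fun z => ?_).2 (hp.existsUnique_diff_first hμ hj1 hA hA1)
        rw [ht0, ht]
        exact ⟨fun h => ⟨⟨h.2.1, h.1.2⟩, h.2.2⟩,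
          fun h => ⟨⟨by linarith [h.1.1], h.1.2⟩, h.1.1, h.2⟩⟩
      · rw [ht, ht]
        refine (existsUnique_congr fun z => and_congr_right fun hz => ?_).2
          (hI (n + 1) (by lia)).2.2.2.1
        exact and_iff_right ((hmem (n + 1) (by lia)).1.trans hz.1)
  have hQ : j' (k + 1) ∈ Ioo (t k) (t (k + 1)) := by
    refine hj'.mem_Ioo htm ?_ ?_ ?_ k
    · rintro z (⟨hz, -⟩ | ⟨-, rfl⟩) <;> linarith
    · rintro (_ | n) (⟨h1, h0⟩ | ⟨-, h0⟩)
      · linarith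
      · linarith
      · rw [ht] at h0 h1
        rw [(hp.deriv_fst _ h1).deriv, (hmem (n + 1) (by lia)).2, mul_zero, zero_sub,
          neg_eq_zero] at h0
        exact (hI (n + 1) (by lia)).1 h0
      · rw [ht] at h0
        exact (hmem (n + 1) (by lia)).1.ne' h0
    · rintro (_ | n)
      · rw [ht0, ht]
        rcases hμ.eq_or_lt with rfl | hμ0
        · refine ⟨0, ⟨⟨by norm_num, hj1⟩, Or.inr ⟨rfl, rfl⟩⟩, ?_⟩
          rintro z ⟨hz, ⟨hz0, hd⟩ | ⟨-, h0⟩⟩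
          · have h1 := hB1 z ⟨hz0, hz.2.le⟩
            rw [(hp.deriv_fst z hz0).deriv, zero_div, zero_mul] at hd
            linarith
          · exact h0
        · refine (existsUnique_congr fun z => ?_).2
            (hp.existsUnique_deriv_first hμ0 hj1 (besselJ_zero_right hμ0) hA hA1)
          constructor
          · rintro ⟨hz, ⟨hz0, hd⟩ | ⟨h0, -⟩⟩
            · exact ⟨⟨hz0, hz.2⟩, hd⟩
            · exact absurd h0 hμ0.ne'
          · exact fun h => ⟨⟨by linarith [h.1.1], h.1.2⟩, Or.inl ⟨h.1.1, h.2⟩⟩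
      · rw [ht, ht]
        refine (existsUnique_congr fun z => and_congr_right fun hz => ?_).2
          (hI (n + 1) (by lia)).2.2.1
        have hz0 := (hmem (n + 1) (by lia)).1.trans hz.1
        exact ⟨fun h => h.elim (fun h => h.2) fun h => absurd h.2 hz0.ne', fun h => Or.inl ⟨hz0, h⟩⟩
  have hQ0 : deriv (besselJ μ) (j' (k + 1)) = 0 := by
    rcases hj'.2.1 (k + 1) (by lia) with h | h
    · exact h.2
    · rw [htk] at hQ
      exact absurd h.2 ((hmem k hk).1.trans hQ.1).ne'
  rw [htk, ht] at hD hQ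
  obtain ⟨h1, h2⟩ := (hI k hk).2.2.2.2 _ hS _ hQ _ hD (hlamPlus.2.1 k hk).2 hQ0
    (hlamMinus.2.1 (k + 1) (by lia)).2
  exact ⟨hS.1, h1, h2, hD.2⟩
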